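/- arXiv:2510.20945 — 5 statements merged into one kernel-verified Lean document; each statement's English description precedes it below -/
import Mathlib

section
/- Let H be a complex normed vector space, W a subspace of H, and A, K : W → H linear maps. Assume: (1) there exist constants C₀ > 0 and r₀ > 0 such that for every real α with |α| ≥ r₀ and every ξ ∈ W one has C₀·|α|·‖ξ‖ ≤ ‖A ξ − (iα)·ξ‖; (2) K has vanishing A-bound, i.e. for every ε > 0 there exists b ≥ 0 such that ‖K ξ‖ ≤ ε·‖A ξ‖ + b·‖ξ‖ for all ξ ∈ W. Then there exist constants C₁ > 0 and r₁ > 0 such that for every real α with |α| ≥ r₁ and every ξ ∈ W one has C₁·|α|·‖ξ‖ ≤ ‖(A + K) ξ − (iα)·ξ‖. -/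
/-- Stability of the quantitative Rabier estimate under perturbations with vanishing
`A`-bound: if `C₀|α|‖ξ‖ ≤ ‖Aξ − iαξ‖` for `|α| ≥ r₀` and `K` has vanishing `A`-bound,
then there are `C₁ > 0`, `r₁ > 0` with `C₁|α|‖ξ‖ ≤ ‖(A+K)ξ − iαξ‖` for `|α| ≥ r₁`. -/
theorem stmt10 {H : Type*} [NormedAddCommGroup H] [NormedSpace ℂ H]
    (W : Subspace ℂ H) (A K : W →ₗ[ℂ] H)
    (hA : ∃ C₀ > (0:ℝ), ∃ r₀ > (0:ℝ), ∀ α : ℝ, r₀ ≤ |α| →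
      ∀ ξ : W, C₀ * |α| * ‖(ξ : H)‖ ≤ ‖A ξ - (Complex.I * (α : ℂ)) • (ξ : H)‖)
    (hK : ∀ ε > (0:ℝ), ∃ b ≥ (0:ℝ), ∀ ξ : W, ‖K ξ‖ ≤ ε * ‖A ξ‖ + b * ‖(ξ : H)‖) :
    ∃ C₁ > (0:ℝ), ∃ r₁ > (0:ℝ), ∀ α : ℝ, r₁ ≤ |α| →
      ∀ ξ : W, C₁ * |α| * ‖(ξ : H)‖ ≤ ‖(A ξ + K ξ) - (Complex.I * (α : ℂ)) • (ξ : H)‖ := by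
  obtain ⟨C, hC, r, hr, hA⟩ := hA
  have hε : 0 < C / (2 * (1 + C)) := by positivity
  obtain ⟨b, hb, hK⟩ := hK _ hε
  have he : C / (2 * (1 + C)) * (1 + C) = C / 2 := by field_simp
  generalize C / (2 * (1 + C)) = ε at *
  have hε1 : ε ≤ 1 := by nlinarith
  refine ⟨C / 4, by positivity, r + 4 * b / C, by positivity, fun α hα ξ => ?_⟩
  have h0 : 0 ≤ 4 * b / C := by positivity
  have h1 := hA α (by linarith) ξ
  have h2 := hK ξ
  have h3 : b ≤ C / 4 * |α| := by
    have h : 4 * b / C ≤ |α| := by linarith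
    rw [div_le_iff₀ hC] at h
    linarith
  have h4 : b * ‖(ξ : H)‖ ≤ C / 4 * |α| * ‖(ξ : H)‖ :=
    mul_le_mul_of_nonneg_right h3 (norm_nonneg _)
  have hs : ‖(Complex.I * (α : ℂ)) • (ξ : H)‖ = |α| * ‖(ξ : H)‖ := by
    simp [norm_smul]
  have h5 : ‖A ξ‖ ≤ ‖A ξ - (Complex.I * (α : ℂ)) • (ξ : H)‖ + |α| * ‖(ξ : H)‖ := by
    rw [← hs]
    exact norm_le_norm_sub_add _ _
  have h6 : ‖A ξ - (Complex.I * (α : ℂ)) • (ξ : H)‖ ≤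
      ‖(A ξ + K ξ) - (Complex.I * (α : ℂ)) • (ξ : H)‖ + ‖K ξ‖ := by
    have := norm_sub_le ((A ξ + K ξ) - (Complex.I * (α : ℂ)) • (ξ : H)) (K ξ)
    have e : (A ξ + K ξ) - (Complex.I * (α : ℂ)) • (ξ : H) - K ξ =
        A ξ - (Complex.I * (α : ℂ)) • (ξ : H) := by abel
    rwa [e] at this
  have h7 := mul_le_mul_of_nonneg_left h5 hε.le
  have h8 := mul_le_mul_of_nonneg_left h1 (sub_nonneg.2 hε1)
  have h9 : ε * (1 + C) * (|α| * ‖(ξ : H)‖) = C / 2 * (|α| * ‖(ξ : H)‖) := by rw [he]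
  linarith
end

section
/- Let Q be a symmetric positive definite real k×k matrix and define a sequence of matrices by R₁ = 𝟙 and R_{n+1} = (1/2)·(R_n + R_n⁻¹·Q) for n ≥ 1. Then for every n ≥ 1 the matrix R_n commutes with Q and is symmetric positive definite. -/
open scoped MatrixOrder Matrix.Norms.L2Operator in
theorem heron_mul_posSemidef {k : ℕ} {A B : Matrix (Fin k) (Fin k) ℝ} (hA : A.PosSemidef)
    (hB : B.PosSemidef) (h : Commute A B) : (A * B).PosSemidef :=
  Matrix.nonneg_iff_posSemidef.1 (Commute.mul_nonneg (Matrix.nonneg_iff_posSemidef.2 hA)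
    (Matrix.nonneg_iff_posSemidef.2 hB) h)

/-- Heron matrix iteration: for a symmetric positive definite real `k×k` matrix `Q`,
with `R₁ = 𝟙` and `R_{n+1} = (1/2)(R_n + R_n⁻¹ Q)`, each `R_n` (n ≥ 1) commutes
with `Q` and is symmetric positive definite. -/
theorem stmt14 (k : ℕ) (Q : Matrix (Fin k) (Fin k) ℝ) (hQ : Q.PosDef)
    (R : ℕ → Matrix (Fin k) (Fin k) ℝ) (hR1 : R 1 = 1)
    (hrec : ∀ n : ℕ, 1 ≤ n → R (n + 1) = ((1:ℝ)/2) • (R n + (R n)⁻¹ * Q)) :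
    ∀ n : ℕ, 1 ≤ n → R n * Q = Q * R n ∧ (R n).transpose = R n ∧ (R n).PosDef := by
  have key : ∀ n : ℕ, 1 ≤ n → Commute (R n) Q ∧ (R n).PosDef := by
    intro n hn
    induction n, hn using Nat.le_induction with
    | base =>
      rw [hR1]
      exact ⟨Commute.one_left Q, Matrix.PosDef.one⟩
    | succ n hn ih =>
      obtain ⟨hc, hp⟩ := ih
      have hi : Commute (R n)⁻¹ Q := by
        have hdet := (Matrix.isUnit_iff_isUnit_det _).1 hp.isUnit
        have e : (R n)⁻¹ * (R n * Q) * (R n)⁻¹ = (R n)⁻¹ * (Q * R n) * (R n)⁻¹ := by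
          rw [hc.eq]
        rw [Matrix.nonsing_inv_mul_cancel_left _ _ hdet, ← Matrix.mul_assoc,
          Matrix.mul_nonsing_inv_cancel_right _ _ hdet] at e
        exact e.symm
      rw [hrec n hn]
      refine ⟨(hc.add_left (hi.mul_left (Commute.refl Q))).smul_left _, ?_⟩
      exact (hp.add_posSemidef
        (heron_mul_posSemidef hp.inv.posSemidef hQ.posSemidef hi)).smul (by norm_num)
  intro n hn
  obtain ⟨hc, hp⟩ := key n hn
  refine ⟨hc.eq, ?_, hp⟩
  have := hp.isHermitian.eq
  rwa [Matrix.conjTranspose_eq_transpose_of_trivial] at this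
end

section
/- Let Q be a symmetric positive definite real k×k matrix and define a sequence of matrices by R₁ = 𝟙 and R_{n+1} = (1/2)·(R_n + R_n⁻¹·Q) for n ≥ 1. Then the sequence (R_n) converges to a matrix R which is symmetric, positive definite, and satisfies R·R = Q. -/
noncomputable def heronSeq (a : ℝ) : ℕ → ℝ
  | 0 => 1
  | n + 1 => (1/2) * (heronSeq a n + (heronSeq a n)⁻¹ * a)

lemma heronSeq_pos {a : ℝ} (ha : 0 < a) (n : ℕ) : 0 < heronSeq a n := by
  induction n with
  | zero => simp [heronSeq]
  | succ n ih => rw [heronSeq]; positivity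

lemma heronSeq_sub {a : ℝ} (ha : 0 < a) (n : ℕ) :
    heronSeq a (n+1) - √a = (heronSeq a n - √a)^2 / (2 * heronSeq a n) := by
  have h := heronSeq_pos ha n
  have hs : √a ^ 2 = a := Real.sq_sqrt ha.le
  rw [heronSeq]
  field_simp
  linear_combination -hs

lemma heronSeq_ge {a : ℝ} (ha : 0 < a) (n : ℕ) : 0 ≤ heronSeq a (n+1) - √a := by
  rw [heronSeq_sub ha]
  have h := heronSeq_pos ha n
  positivity

lemma heronSeq_le {a : ℝ} (ha : 0 < a) (n : ℕ) :
    heronSeq a (n+1) - √a ≤ (heronSeq a 1 - √a) * (1/2)^n := by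
  induction n with
  | zero => simp
  | succ n ih =>
    have h := heronSeq_pos ha (n+1)
    have h2 := heronSeq_ge ha n
    have hs := Real.sqrt_nonneg a
    have : heronSeq a (n+1+1) - √a ≤ (heronSeq a (n+1) - √a) * (1/2) := by
      rw [heronSeq_sub ha (n+1), div_le_iff₀ (by positivity)]
      nlinarith [mul_nonneg h2 hs]
    rw [pow_succ]
    linarith

lemma heronSeq_tendsto {a : ℝ} (ha : 0 < a) :
    Filter.Tendsto (heronSeq a) Filter.atTop (nhds (√a)) := by
  rw [← Filter.tendsto_add_atTop_iff_nat 1, ← tendsto_sub_nhds_zero_iff]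
  refine squeeze_zero (heronSeq_ge ha) (heronSeq_le ha) ?_
  have := (tendsto_pow_atTop_nhds_zero_of_lt_one (r := (1/2:ℝ)) (by norm_num) (by norm_num)).const_mul
    (heronSeq a 1 - √a)
  simpa using this

open Matrix in
/-- Heron matrix iteration converges: for a symmetric positive definite real `k×k`
matrix `Q`, with `R₁ = 𝟙` and `R_{n+1} = (1/2)(R_n + R_n⁻¹ Q)`, the sequence `(R_n)`
converges to a symmetric positive definite matrix `R` with `R·R = Q`. -/
theorem stmt15 (k : ℕ) (Q : Matrix (Fin k) (Fin k) ℝ) (hQ : Q.PosDef)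
    (R : ℕ → Matrix (Fin k) (Fin k) ℝ) (hR1 : R 1 = 1)
    (hrec : ∀ n : ℕ, 1 ≤ n → R (n + 1) = ((1:ℝ)/2) • (R n + (R n)⁻¹ * Q)) :
    ∃ L : Matrix (Fin k) (Fin k) ℝ,
      Filter.Tendsto R Filter.atTop (nhds L) ∧
      L.transpose = L ∧ L.PosDef ∧ L * L = Q := by
  obtain ⟨U, d, hd, hUV, hVU, hQd⟩ : ∃ (U : Matrix (Fin k) (Fin k) ℝ) (d : Fin k → ℝ),
      (∀ i, 0 < d i) ∧ U * star U = 1 ∧ star U * U = 1 ∧ Q = U * diagonal d * star U := by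
    refine ⟨hQ.1.eigenvectorUnitary, hQ.1.eigenvalues, hQ.eigenvalues_pos,
      Unitary.coe_mul_star_self _, Unitary.coe_star_mul_self _, ?_⟩
    have := hQ.1.spectral_theorem
    rw [Unitary.conjStarAlgAut_apply] at this
    exact this
  have mulc : ∀ A B : Matrix (Fin k) (Fin k) ℝ,
      (U * A * star U) * (U * B * star U) = U * (A * B) * star U := by
    intro A B
    calc _ = U * A * (star U * U) * B * star U := by simp only [Matrix.mul_assoc]
      _ = _ := by rw [hVU]; simp only [Matrix.mul_assoc, Matrix.mul_one]
  have key : ∀ n, R (n+1) = U * diagonal (fun i => heronSeq (d i) n) * star U := by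
    intro n
    induction n with
    | zero => simp [hR1, heronSeq, hUV]
    | succ n ih =>
      have hinv : (R (n+1))⁻¹ = U * diagonal (fun i => (heronSeq (d i) n)⁻¹) * star U := by
        apply Matrix.inv_eq_right_inv
        rw [ih, mulc, diagonal_mul_diagonal]
        have : (fun i => heronSeq (d i) n * (heronSeq (d i) n)⁻¹) = fun _ => 1 := by
          ext i
          exact mul_inv_cancel₀ (heronSeq_pos (hd i) n).ne'
        rw [this, diagonal_one, Matrix.mul_one, hUV]
      rw [hrec (n+1) (by omega), hinv, ih, hQd, mulc, diagonal_mul_diagonal, ← Matrix.add_mul,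
        ← Matrix.mul_add, diagonal_add, ← Matrix.smul_mul, ← Matrix.mul_smul, ← diagonal_smul]
      rfl
  have hPD : (U * diagonal (fun i => √(d i)) * star U).PosDef := by
    have hU : IsUnit U := ⟨⟨U, star U, hUV, hVU⟩, rfl⟩
    rw [Matrix.IsUnit.posDef_star_right_conjugate_iff hU, posDef_diagonal_iff]
    exact fun i => Real.sqrt_pos.2 (hd i)
  refine ⟨U * diagonal (fun i => √(d i)) * star U, ?_, ?_, hPD, ?_⟩
  · rw [← Filter.tendsto_add_atTop_iff_nat 1]
    simp_rw [key]
    have hc : Continuous fun v : Fin k → ℝ => U * diagonal v * star U := by fun_prop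
    exact (hc.tendsto _).comp (tendsto_pi_nhds.2 fun i => heronSeq_tendsto (hd i))
  · simpa using hPD.1.eq
  · rw [mulc, diagonal_mul_diagonal, hQd]
    simp [Real.mul_self_sqrt (hd _).le]
end

section
/- Let h : ℕ → ℝ be a monotone increasing sequence of positive real numbers and let n ∈ ℕ. Let η : ℝ → ℓ²(ℕ, ℝ) be a differentiable function such that: (i) ∫_ℝ ‖η'(s)‖²_{ℓ²} ds ≤ 1; (ii) ∫_ℝ (∑_{k} h(k)·η(s)(k)²) ds ≤ 1; (iii) η(s)(k) = 0 for every s ∈ ℝ and every k < n. Then sup_{s∈ℝ} ‖η(s)‖_{ℓ²} ≤ (3/h(n))^{1/4}. -/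
open MeasureTheory Set Filter Topology in
theorem stmt18_aux (H : ℝ) (hH : 0 < H) {E : Type*} [NormedAddCommGroup E]
    [InnerProductSpace ℝ E] [CompleteSpace E] (η : ℝ → E) (hη : Differentiable ℝ η)
    (h1 : (∫⁻ s : ℝ, ENNReal.ofReal (‖deriv η s‖ ^ 2)) ≤ 1)
    (h2 : (∫⁻ s : ℝ, ENNReal.ofReal (H * ‖η s‖ ^ 2)) ≤ 1) (s : ℝ) :
    ‖η s‖ ^ 2 ≤ 1 / √H := by
  have hS : 0 < √H := Real.sqrt_pos.2 hH
  have hSS : √H * √H = H := Real.mul_self_sqrt hH.le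
  have md : StronglyMeasurable (deriv η) := stronglyMeasurable_deriv η
  have m1 : AEStronglyMeasurable (fun s => ‖deriv η s‖ ^ 2) volume :=
    (md.norm.pow 2).aestronglyMeasurable
  have m2 : AEStronglyMeasurable (fun s => H * ‖η s‖ ^ 2) volume :=
    (continuous_const.mul (hη.continuous.norm.pow 2)).aestronglyMeasurable
  have i1 : Integrable (fun s => ‖deriv η s‖ ^ 2) :=
    (lintegral_ofReal_ne_top_iff_integrable m1 (ae_of_all _ fun s => by positivity)).1
      (ne_top_of_le_ne_top ENNReal.one_ne_top h1)
  have i2 : Integrable (fun s => H * ‖η s‖ ^ 2) :=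
    (lintegral_ofReal_ne_top_iff_integrable m2 (ae_of_all _ fun s => by positivity)).1
      (ne_top_of_le_ne_top ENNReal.one_ne_top h2)
  have e1 : ∫ s, ‖deriv η s‖ ^ 2 ≤ 1 := by
    rw [integral_eq_lintegral_of_nonneg_ae (ae_of_all _ fun s => by positivity) m1]
    exact ENNReal.toReal_le_of_le_ofReal zero_le_one (by simpa using h1)
  have e2 : ∫ s, H * ‖η s‖ ^ 2 ≤ 1 := by
    rw [integral_eq_lintegral_of_nonneg_ae (ae_of_all _ fun s => by positivity) m2]
    exact ENNReal.toReal_le_of_le_ofReal zero_le_one (by simpa using h2)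
  have i3 : Integrable (fun s => ‖η s‖ ^ 2) := by
    have := i2.const_mul H⁻¹
    refine this.congr (ae_of_all _ fun s => ?_)
    simp only
    field_simp
  have hd : ∀ x, HasDerivAt (fun s => ‖η s‖ ^ 2) (2 * inner ℝ (η x) (deriv η x)) x :=
    fun x => (hη x).hasDerivAt.norm_sq
  have hb : ∀ x, |2 * inner ℝ (η x) (deriv η x)| ≤
      (1 / √H) * (H * ‖η x‖ ^ 2 + ‖deriv η x‖ ^ 2) := by
    intro x
    have c := abs_real_inner_le_norm (η x) (deriv η x)
    rw [abs_mul, abs_two, one_div, inv_mul_eq_div, le_div_iff₀ hS]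
    have : 2 * (‖η x‖ * ‖deriv η x‖) * √H ≤ H * ‖η x‖ ^ 2 + ‖deriv η x‖ ^ 2 := by
      have e : H * ‖η x‖ ^ 2 = √H * √H * ‖η x‖ ^ 2 := by rw [hSS]
      rw [e]
      nlinarith [sq_nonneg (√H * ‖η x‖ - ‖deriv η x‖)]
    refine le_trans ?_ this
    gcongr
  have ib := (i2.add i1).const_mul (1 / √H)
  have id : Integrable (fun x => 2 * inner ℝ (η x) (deriv η x)) := by
    refine ib.mono' ?_ (ae_of_all _ hb)
    exact ((hη.continuous.stronglyMeasurable.inner md).const_mul 2).aestronglyMeasurable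
  have t1 := tendsto_zero_of_hasDerivAt_of_integrableOn_Iic (a := s) (fun x _ => hd x)
    id.integrableOn i3.integrableOn
  have t2 := tendsto_zero_of_hasDerivAt_of_integrableOn_Ioi (a := s) (fun x _ => hd x)
    id.integrableOn i3.integrableOn
  have f1 := integral_Iic_of_hasDerivAt_of_tendsto' (a := s) (fun x _ => hd x)
    id.integrableOn t1
  have f2 := integral_Ioi_of_hasDerivAt_of_tendsto' (a := s) (fun x _ => hd x)
    id.integrableOn t2
  have g1 := (abs_integral_le_integral_abs (μ := volume.restrict (Iic s))
    (f := fun x => 2 * inner ℝ (η x) (deriv η x)))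
  have g2 := (abs_integral_le_integral_abs (μ := volume.restrict (Ioi s))
    (f := fun x => 2 * inner ℝ (η x) (deriv η x)))
  have g3 := intervalIntegral.integral_Iic_add_Ioi (b := s) id.abs.integrableOn id.abs.integrableOn
  have g4 := integral_mono id.abs ib hb
  have g5 : ∫ x, (1 / √H) * (H * ‖η x‖ ^ 2 + ‖deriv η x‖ ^ 2) ≤ (1 / √H) * 2 := by
    rw [integral_const_mul, integral_add i2 i1]
    gcongr
    linarith
  have g6 := g4.trans g5
  rw [f1] at g1
  rw [f2] at g2
  have := le_abs_self (‖η s‖ ^ 2 - 0)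
  have := neg_abs_le (0 - ‖η s‖ ^ 2)
  linarith

/-- The key `L^∞` estimate: if `η : ℝ → ℓ²(ℕ, ℝ)` is differentiable with
`∫ ‖η'‖² ≤ 1`, `∫ ∑ h(k) η(s)(k)² ≤ 1`, and `η(s)(k) = 0` for `k < n`, then
`‖η(s)‖ ≤ (3/h(n))^{1/4}` for every `s`. -/
theorem stmt18 (h : ℕ → ℝ) (hpos : ∀ k : ℕ, 0 < h k) (hmono : Monotone h) (n : ℕ)
    (η : ℝ → lp (fun _ : ℕ => ℝ) 2) (hη : Differentiable ℝ η)
    (h1 : (∫⁻ s : ℝ, ENNReal.ofReal (‖deriv η s‖ ^ 2)) ≤ 1)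
    (h2 : (∫⁻ s : ℝ, ∑' k : ℕ, ENNReal.ofReal (h k * ((η s : ∀ _ : ℕ, ℝ) k) ^ 2)) ≤ 1)
    (h3 : ∀ s : ℝ, ∀ k : ℕ, k < n → (η s : ∀ _ : ℕ, ℝ) k = 0) :
    ∀ s : ℝ, ‖η s‖ ≤ (3 / h n) ^ ((1:ℝ)/4) := by
  intro s
  have hH := hpos n
  have key : ‖η s‖ ^ 2 ≤ 1 / √(h n) := by
    refine stmt18_aux (h n) hH η hη h1
      (le_trans (MeasureTheory.lintegral_mono fun x => ?_) h2) s
    have hs := lp.hasSum_norm (p := 2) (by norm_num) (η x)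
    simp only [ENNReal.toReal_ofNat, Real.rpow_ofNat, Real.norm_eq_abs, sq_abs] at hs
    have hs := hs.mul_left (h n)
    simp only
    rw [← hs.tsum_eq, ENNReal.ofReal_tsum_of_nonneg (fun k => by positivity) hs.summable]
    refine ENNReal.tsum_le_tsum fun k => ENNReal.ofReal_le_ofReal ?_
    by_cases hk : k < n
    · simp [h3 x k hk]
    · exact mul_le_mul_of_nonneg_right (hmono (not_lt.1 hk)) (sq_nonneg _)
  have hS : 0 < √(h n) := Real.sqrt_pos.2 hH
  have k4 : ‖η s‖ ^ 4 ≤ 3 / h n := by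
    calc ‖η s‖ ^ 4 = (‖η s‖ ^ 2) ^ 2 := by ring
      _ ≤ (1 / √(h n)) ^ 2 := by gcongr
      _ = 1 / h n := by rw [div_pow, Real.sq_sqrt hH.le, one_pow]
      _ ≤ 3 / h n := by gcongr; norm_num
  calc ‖η s‖ = (‖η s‖ ^ 4) ^ ((1:ℝ)/4) := by
        rw [← Real.rpow_natCast, ← Real.rpow_mul (norm_nonneg _)]; norm_num
    _ ≤ _ := by gcongr
end

section
/- Let m ∈ ℕ, let λ : ℝ^m → ℝ^m be a smooth map (the coefficients λ_i of a 1-form), and let u, ξ : ℝ → ℝ^m be smooth 1-periodic maps. Then the derivative at r = 0 of the function r ↦ ∫₀¹ ∑_i λ_i(u(t) + r·ξ(t)) · (u̇_i(t) + r·ξ̇_i(t)) dt equals ∫₀¹ ∑_{i,j} (∂_j λ_i(u(t)) − ∂_i λ_j(u(t))) · ξ_j(t) · u̇_i(t) dt. -/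
/-- First variation of the action functional: the derivative at `r = 0` of
`r ↦ ∫₀¹ ∑ᵢ λᵢ(u(t) + r ξ(t)) (u̇ᵢ(t) + r ξ̇ᵢ(t)) dt` equals
`∫₀¹ ∑ᵢⱼ (∂ⱼλᵢ(u(t)) − ∂ᵢλⱼ(u(t))) ξⱼ(t) u̇ᵢ(t) dt`. -/
theorem stmt19 (m : ℕ) (lam : (Fin m → ℝ) → (Fin m → ℝ)) (hlam : ContDiff ℝ (⊤ : ℕ∞) lam)
    (u ξ : ℝ → (Fin m → ℝ)) (hu : ContDiff ℝ (⊤ : ℕ∞) u) (hξ : ContDiff ℝ (⊤ : ℕ∞) ξ)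
    (hup : ∀ t : ℝ, u (t + 1) = u t) (hξp : ∀ t : ℝ, ξ (t + 1) = ξ t) :
    HasDerivAt
      (fun r : ℝ =>
        ∫ t in (0:ℝ)..1, ∑ i : Fin m,
          lam (u t + r • ξ t) i * (deriv u t i + r * deriv ξ t i))
      (∫ t in (0:ℝ)..1, ∑ i : Fin m, ∑ j : Fin m,
        ((fderiv ℝ (fun y => lam y i) (u t)) (Pi.single j 1) -
          (fderiv ℝ (fun y => lam y j) (u t)) (Pi.single i 1)) * ξ t j * deriv u t i)
      0 := by
  have hlc : Continuous lam := hlam.continuous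
  have huc : Continuous u := hu.continuous
  have hξc : Continuous ξ := hξ.continuous
  have hduc : Continuous (deriv u) := hu.continuous_deriv (by simp)
  have hdξc : Continuous (deriv ξ) := hξ.continuous_deriv (by simp)
  have hli : ∀ i, ContDiff ℝ (⊤ : ℕ∞) (fun y => lam y i) := fun i => contDiff_pi.1 hlam i
  have hdl : ∀ i, Continuous (fderiv ℝ (fun y => lam y i)) :=
    fun i => (hli i).continuous_fderiv (by simp)
  have hld : ∀ i x, HasFDerivAt (fun y => lam y i) (fderiv ℝ (fun y => lam y i) x) x :=
    fun i x => ((hli i).differentiable (by simp) x).hasFDerivAt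
  have hud : ∀ t, HasDerivAt u (deriv u t) t :=
    fun t => (hu.differentiable (by simp) t).hasDerivAt
  have hξd : ∀ t, HasDerivAt ξ (deriv ξ t) t :=
    fun t => (hξ.differentiable (by simp) t).hasDerivAt
  let G : ℝ → ℝ → ℝ := fun r t => ∑ i : Fin m,
    (fderiv ℝ (fun y => lam y i) (u t + r • ξ t) (ξ t) * (deriv u t i + r * deriv ξ t i)
      + lam (u t + r • ξ t) i * deriv ξ t i)
  have hGc : Continuous (fun p : ℝ × ℝ => G p.1 p.2) := by
    apply continuous_finsetSum
    intro i _
    have hp : Continuous (fun p : ℝ × ℝ => u p.2 + p.1 • ξ p.2) :=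
      (huc.comp continuous_snd).add (continuous_fst.smul (hξc.comp continuous_snd))
    have h1 : Continuous (fun p : ℝ × ℝ =>
        fderiv ℝ (fun y => lam y i) (u p.2 + p.1 • ξ p.2) (ξ p.2)) :=
      ((hdl i).comp hp).clm_apply (hξc.comp continuous_snd)
    have h2 : Continuous (fun p : ℝ × ℝ => lam (u p.2 + p.1 • ξ p.2) i) :=
      (hli i).continuous.comp hp
    have h3 : Continuous (fun p : ℝ × ℝ => deriv u p.2 i) :=
      (continuous_apply i).comp (hduc.comp continuous_snd)
    have h4 : Continuous (fun p : ℝ × ℝ => deriv ξ p.2 i) :=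
      (continuous_apply i).comp (hdξc.comp continuous_snd)
    exact (h1.mul (h3.add (continuous_fst.mul h4))).add (h2.mul h4)
  have hFc : ∀ r : ℝ, Continuous (fun t => ∑ i : Fin m,
      lam (u t + r • ξ t) i * (deriv u t i + r * deriv ξ t i)) := by
    intro r
    refine continuous_finsetSum _ fun i _ => ?_
    exact ((hli i).continuous.comp (huc.add (hξc.const_smul r))).mul
      (((continuous_apply i).comp hduc).add
        (continuous_const.mul ((continuous_apply i).comp hdξc)))
  have hFd : ∀ r t : ℝ, HasDerivAt (fun r : ℝ => ∑ i : Fin m,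
      lam (u t + r • ξ t) i * (deriv u t i + r * deriv ξ t i)) (G r t) r := by
    intro r t
    apply HasDerivAt.fun_sum
    intro i _
    have ha : HasDerivAt (fun r : ℝ => u t + r • ξ t) (ξ t) r := by
      simpa using ((hasDerivAt_id r).smul_const (ξ t)).const_add (u t)
    have hb : HasDerivAt (fun r : ℝ => deriv u t i + r * deriv ξ t i) (deriv ξ t i) r := by
      simpa using ((hasDerivAt_id r).mul_const (deriv ξ t i)).const_add (deriv u t i)
    exact ((hld i _).comp_hasDerivAt r ha).mul hb
  obtain ⟨C, hC⟩ := ((isCompact_Icc (a := (-1:ℝ)) (b := 1)).prod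
    (isCompact_Icc (a := (0:ℝ)) (b := 1))).exists_bound_of_continuousOn hGc.continuousOn
  have key := (intervalIntegral.hasDerivAt_integral_of_dominated_loc_of_deriv_le
    (μ := MeasureTheory.volume) (a := 0) (b := 1) (x₀ := (0:ℝ)) (s := Set.Icc (-1:ℝ) 1)
    (bound := fun _ => C) (F' := G)
    (F := fun (r t : ℝ) => ∑ i : Fin m,
      lam (u t + r • ξ t) i * (deriv u t i + r * deriv ξ t i))
    (Icc_mem_nhds (by norm_num) (by norm_num))
    (Filter.Eventually.of_forall fun r => (hFc r).aestronglyMeasurable)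
    ((hFc 0).intervalIntegrable _ _)
    ((hGc.comp (Continuous.prodMk_right (0:ℝ))).aestronglyMeasurable)
    (Filter.Eventually.of_forall fun t ht r hr => hC (r, t) ⟨hr, by
      rw [Set.uIoc_of_le zero_le_one] at ht
      exact ⟨ht.1.le, ht.2⟩⟩)
    (by simp)
    (Filter.Eventually.of_forall fun t _ r _ => hFd r t)).2
  refine HasDerivAt.congr_deriv key (Eq.symm ?_)
  -- the total derivative term
  let D : ℝ → ℝ := fun t => ∑ i : Fin m,
    (fderiv ℝ (fun y => lam y i) (u t) (deriv u t) * ξ t i + lam (u t) i * deriv ξ t i)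
  have hDc : Continuous D := by
    apply continuous_finsetSum
    intro i _
    have h1 : Continuous (fun t : ℝ => fderiv ℝ (fun y => lam y i) (u t) (deriv u t)) :=
      ((hdl i).comp huc).clm_apply hduc
    have h2 : Continuous (fun t : ℝ => lam (u t) i) := (hli i).continuous.comp huc
    exact (h1.mul ((continuous_apply i).comp hξc)).add
      (h2.mul ((continuous_apply i).comp hdξc))
  have hDd : ∀ t, HasDerivAt (fun t => ∑ i : Fin m, lam (u t) i * ξ t i) (D t) t := by
    intro t
    apply HasDerivAt.fun_sum
    intro i _
    exact ((hld i _).comp_hasDerivAt t (hud t)).mul (hasDerivAt_pi.1 (hξd t) i)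
  have hD0 : ∫ t in (0:ℝ)..1, D t = 0 := by
    rw [intervalIntegral.integral_eq_sub_of_hasDerivAt (fun t _ => hDd t)
      (hDc.intervalIntegrable _ _)]
    have h1 := hup 0
    have h2 := hξp 0
    rw [zero_add] at h1 h2
    rw [h1, h2, sub_self]
  have hG0 : Continuous (G 0) := hGc.comp (Continuous.prodMk_right (0:ℝ))
  have hsub : ∫ t in (0:ℝ)..1, G 0 t = ∫ t in (0:ℝ)..1, (G 0 t - D t) := by
    rw [intervalIntegral.integral_sub (hG0.intervalIntegrable _ _)
      (hDc.intervalIntegrable _ _), hD0, sub_zero]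
  rw [hsub]
  congr 1
  funext t
  have hexp : ∀ (L : (Fin m → ℝ) →L[ℝ] ℝ) (v : Fin m → ℝ),
      L v = ∑ j, L (Pi.single j 1) * v j := by
    intro L v
    conv_lhs => rw [pi_eq_sum_univ' v]
    simp [map_sum, mul_comm, Pi.single_apply, Pi.single, Function.update]
  have e1 : G 0 t - D t = ∑ i : Fin m, fderiv ℝ (fun y => lam y i) (u t) (ξ t) * deriv u t i
      - ∑ i : Fin m, fderiv ℝ (fun y => lam y i) (u t) (deriv u t) * ξ t i := by
    simp only [G, D, zero_smul, add_zero, zero_mul, Finset.sum_add_distrib]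
    ring
  rw [e1]
  simp only [sub_mul, Finset.sum_sub_distrib]
  congr 1
  · refine Finset.sum_congr rfl fun i _ => ?_
    rw [hexp _ (ξ t), Finset.sum_mul]
  · rw [Finset.sum_comm]
    refine Finset.sum_congr rfl fun i _ => ?_
    rw [hexp _ (deriv u t), Finset.sum_mul]
    refine Finset.sum_congr rfl fun j _ => ?_
    ring
end
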